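/- Let n ≥ 4 and let k_1, k_2, ℓ_2 be integers with n−1 ≥ k_1 > k_2 ≥ 2 and ℓ_2 > 2. Set A_1 = {u ∈ A(k_1,2) : u ≥_lex x_{k_2} x_{k_1+1}} and A_2 = {u ∈ A(k_2,ℓ_2) : u ≥_lex x_{k_2+1}^{ℓ_2}}. Then A_2 \ LexShad^{ℓ_2−2}(A_1) = {x_{k_2+1}^{ℓ_2}}. -/

import Mathlib

namespace ExtremalBetti

/-- A monomial of `K[x_1,…,x_n]`, identified with its exponent vector in `ℕ^n`. -/
abbrev Mon (n : ℕ) := Fin n → ℕ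

/-- The degree of a monomial. -/
def degree {n : ℕ} (u : Mon n) : ℕ := ∑ i, u i

/-- `m(u)`: the (1-based) index of the largest variable dividing `u`; `m(1) = 0`. -/
def maxVar {n : ℕ} (u : Mon n) : ℕ :=
  (Finset.univ.filter (fun i : Fin n => u i ≠ 0)).sup (fun i => (i : ℕ) + 1)

/-- The exponent vector of the variable `x_q` (1-based index `q`). -/
def X (n q : ℕ) : Mon n := fun i => if (i : ℕ) + 1 = q then 1 else 0

/-- `lexLT u v` : `v` is strictly lex-greater than `u` (lex order induced by
`x_1 > x_2 > … > x_n`). -/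
def lexLT {n : ℕ} (u v : Mon n) : Prop :=
  ∃ i : Fin n, (∀ j : Fin n, j < i → u j = v j) ∧ u i < v i

/-- `lexLE u v` : `v ≥_lex u`. -/
def lexLE {n : ℕ} (u v : Mon n) : Prop := u = v ∨ lexLT u v

/-- `L(top, bot)` in degree `d`: monomials `z` of degree `d` with `top ≥_lex z ≥_lex bot`. -/
def Lset {n : ℕ} (d : ℕ) (top bot : Mon n) : Set (Mon n) :=
  {z | degree z = d ∧ lexLE z top ∧ lexLE bot z}

/-- `A(k,d)`: monomials of degree `d` with `m(u) = k+1`. -/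
def A (n k d : ℕ) : Set (Mon n) := {u | degree u = d ∧ maxVar u = k + 1}

/-- The shadow of a set of monomials. -/
def shad {n : ℕ} (Ms : Set (Mon n)) : Set (Mon n) :=
  {z | ∃ u ∈ Ms, ∃ i : Fin n, z = u + Pi.single i 1}

/-- The `t`-fold iterated shadow. -/
def shadIter {n : ℕ} : ℕ → Set (Mon n) → Set (Mon n)
  | 0, Ms => Ms
  | t + 1, Ms => shad (shadIter t Ms)

/-- The lexicographic shadow `LexShad^t(𝔐) = L(x_1^{d+t}, w x_n^t)`, where `w` is the
lex-smallest element of `𝔐` (empty if `𝔐` is empty or has no lex-smallest element). -/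
def lexShad {n : ℕ} (t : ℕ) (Ms : Set (Mon n)) : Set (Mon n) :=
  {z | ∃ w ∈ Ms, (∀ v ∈ Ms, lexLE w v) ∧
      z ∈ Lset (degree w + t) ((degree w + t) • X n 1) (w + t • X n n)}

/-- A set of monomials is a monomial ideal iff it is upward closed under divisibility. -/
def IsMonIdeal {n : ℕ} (I : Set (Mon n)) : Prop :=
  ∀ u ∈ I, ∀ v : Mon n, (∀ i, u i ≤ v i) → v ∈ I

/-- `G(I)`: the minimal monomial generators of `I`. -/
def minGens {n : ℕ} (I : Set (Mon n)) : Set (Mon n) :=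
  {u ∈ I | ∀ v ∈ I, (∀ i, v i ≤ u i) → v = u}

/-- `G(I)_d`: the minimal generators of degree `d`. -/
def gens {n : ℕ} (I : Set (Mon n)) (d : ℕ) : Set (Mon n) :=
  {u ∈ minGens I | degree u = d}

/-- `I` is a strongly stable (monomial) ideal with `I ⊊ S` (i.e. `1 ∉ I`):
for every minimal generator `u`, every `i` with `x_i ∣ u` and every `j < i`,
`(x_j u)/x_i ∈ I`. -/
def StronglyStable {n : ℕ} (I : Set (Mon n)) : Prop :=
  IsMonIdeal I ∧ (0 : Mon n) ∉ I ∧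
    ∀ u ∈ minGens I, ∀ i : Fin n, u i ≠ 0 →
      ∀ j : Fin n, j < i → (u - Pi.single i 1 + Pi.single j 1) ∈ I

/-- The initial degree `α(I)` of the monomial ideal `I` equals `d`. -/
def initialDegree {n : ℕ} (I : Set (Mon n)) (d : ℕ) : Prop :=
  (∃ u ∈ I, degree u = d) ∧ ∀ u ∈ I, d ≤ degree u

/-- `(k,ℓ)` is a corner of `I`: `k, ℓ ≥ 1`, `k + 1 = max{m(u) : u ∈ G(I)_ℓ}`, and
`m(u) ≤ k` for every `u ∈ G(I)_j` with `j > ℓ`. -/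
def IsCorner {n : ℕ} (I : Set (Mon n)) (k ℓ : ℕ) : Prop :=
  1 ≤ k ∧ 1 ≤ ℓ ∧
  (∃ u ∈ gens I ℓ, maxVar u = k + 1) ∧
  (∀ u ∈ gens I ℓ, maxVar u ≤ k + 1) ∧
  (∀ j, ℓ < j → ∀ u ∈ gens I j, maxVar u ≤ k)

/-- The value of the corner `(k,ℓ)`: `|{u ∈ G(I)_ℓ : m(u) = k+1}|`. -/
noncomputable def cornerValue {n : ℕ} (I : Set (Mon n)) (k ℓ : ℕ) : ℕ :=
  {u ∈ gens I ℓ | maxVar u = k + 1}.ncard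

/-- The set of corners of `I`. -/
def corners {n : ℕ} (I : Set (Mon n)) : Set (ℕ × ℕ) :=
  {c | IsCorner I c.1 c.2}

/-- `(k,ℓ)` is a corner of the submodule `M = ⊕_j I_j e_j` of `S^m`. -/
def IsCornerMod {n m : ℕ} (I : Fin m → Set (Mon n)) (k ℓ : ℕ) : Prop :=
  1 ≤ k ∧ 1 ≤ ℓ ∧
  (∃ j, ∃ u ∈ gens (I j) ℓ, maxVar u = k + 1) ∧
  (∀ j, ∀ u ∈ gens (I j) ℓ, maxVar u ≤ k + 1) ∧
  (∀ d, ℓ < d → ∀ j, ∀ u ∈ gens (I j) d, maxVar u ≤ k)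

/-- The value of the corner `(k,ℓ)` of `M = ⊕_j I_j e_j`: the number of minimal
generators `u e_j` with `deg u = ℓ` and `m(u) = k+1`. -/
noncomputable def cornerValueMod {n m : ℕ} (I : Fin m → Set (Mon n)) (k ℓ : ℕ) : ℕ :=
  {p : Mon n × Fin m | p.1 ∈ gens (I p.2) ℓ ∧ maxVar p.1 = k + 1}.ncard

/-- The set of corners of the submodule `M = ⊕_j I_j e_j`. -/
def cornersMod {n m : ℕ} (I : Fin m → Set (Mon n)) : Set (ℕ × ℕ) :=
  {c | IsCornerMod I c.1 c.2}

/-- `t = max{p : λ_p ≤ s − p}` (and `t = 0` if no such `p` exists). -/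
def tVal (s : ℕ) (l : ℕ → ℕ) : ℕ :=
  ((Finset.Icc 1 s).filter (fun p => l p ≤ s - p)).sup id

/-- The associated sets `B_1, …, B_s` of the corner sequence
`(κ_1,λ_1), …, (κ_s,λ_s)` (given by `k, l : ℕ → ℕ` on indices `1,…,s`);
`B_0 = ∅`. -/
def assocB (n s : ℕ) (k l : ℕ → ℕ) (p : ℕ) : Set (Mon n) :=
  if p = 0 then ∅
  else if s = 1 then A n (k 1) (l 1)
  else if p = s then {u ∈ A n (k s) (l s) | lexLE ((l s) • X n (k s + 1)) u}
  else if l 1 = 2 ∧ p = 1 then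
    {u ∈ A n (k 1) 2 |
      lexLE (X n (if s = 2 then k 2 else k s - 1) + X n (k 1 + 1)) u}
  else if p ≤ tVal s l then
    {u ∈ A n (k p) (l p) |
      lexLE ((∑ j ∈ Finset.Icc (s - l p + 3) s, X n (k j)) +
          X n (k (s - l p + 2) - 1) + X n (k p + 1)) u}
  else
    {u ∈ A n (k p) (l p) |
      lexLE ((∑ j ∈ Finset.Icc (p + 1) s, X n (k j)) +
          (l p - (s - p)) • X n (k p + 1)) u}

/-- The admissible bound `b_p = |B_p \ LexShad^{λ_p−λ_{p−1}}(B_{p−1})|` of the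
`p`-th pair of the corner sequence. -/
noncomputable def admissibleBound (n s : ℕ) (k l : ℕ → ℕ) (p : ℕ) : ℕ :=
  (assocB n s k l p \ lexShad (l p - l (p - 1)) (assocB n s k l (p - 1))).ncard


/-!
The lexicographic order on exponent vectors is that of `Lex (Fin n → ℕ)`: a translation-invariant
linear order, also between monomials of different degrees, in which every power of `x_q` lies
strictly below `x_p` as soon as `p < q`.

Let `x_k v` be the lex-smallest element of a set `𝔐` of monomials of degree `d`, where
`v ≤ x_{k+1}^{d-1}`. A monomial `u` of degree `ℓ` with `m(u) = k + 1` other than `x_{k+1}^ℓ` is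
divisible by some `x_p` with `p ≤ k`. Then `u / x_p ≥ x_{k+1}^{ℓ-1}`, so
`u ≥ x_k x_{k+1}^{ℓ-1} ≥ x_k v x_n^{ℓ-d}` and `u` lies in the lexicographic shadow of `𝔐`. On the
other hand `x_{k+1}^ℓ < x_k ≤ x_k v x_n^{ℓ-d}`, so `x_{k+1}^ℓ` does not.
-/

section Degree

variable {n : ℕ}

theorem degree_add (u v : Mon n) : degree (u + v) = degree u + degree v :=
  Finset.sum_add_distrib

theorem degree_nsmul (d : ℕ) (u : Mon n) : degree (d • u) = d * degree u :=
  (Finset.mul_sum ..).symm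

theorem X_succ_eq_single (i : Fin n) : X n (i + 1) = Pi.single i 1 := by
  ext j
  simp only [X, Pi.single_apply, Nat.add_right_cancel_iff, Fin.ext_iff]

theorem degree_X {q : ℕ} (hq : 1 ≤ q) (hqn : q ≤ n) : degree (X n q) = 1 := by
  obtain ⟨p, rfl⟩ := Nat.exists_eq_add_of_le' hq
  rw [X_succ_eq_single ⟨p, hqn⟩, degree, Fintype.sum_pi_single']

theorem sum_nsmul_X (u : Mon n) : ∑ i, u i • X n (i + 1) = u := by
  simp only [X_succ_eq_single, ← Pi.single_smul, smul_eq_mul, mul_one, Finset.univ_sum_single]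

theorem X_succ_le {u : Mon n} {i : Fin n} (hi : u i ≠ 0) : X n (i + 1) ≤ u := by
  rw [X_succ_eq_single, Pi.single, update_le_iff]
  exact ⟨Nat.one_le_iff_ne_zero.mpr hi, fun j _ => Nat.zero_le (u j)⟩

end Degree

section MaxVar

variable {n : ℕ}

theorem maxVar_le_iff {u : Mon n} {q : ℕ} : maxVar u ≤ q ↔ ∀ i, u i ≠ 0 → (i : ℕ) + 1 ≤ q := by
  simp only [maxVar, Finset.sup_le_iff, Finset.mem_filter_univ]

theorem maxVar_add (u v : Mon n) : maxVar (u + v) = max (maxVar u) (maxVar v) := by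
  refine eq_of_forall_ge_iff fun q => ?_
  simp only [max_le_iff, maxVar_le_iff, ← forall_and, Pi.add_apply]
  grind

theorem maxVar_nsmul {d : ℕ} (hd : d ≠ 0) (u : Mon n) : maxVar (d • u) = maxVar u := by
  refine eq_of_forall_ge_iff fun q => ?_
  simp only [maxVar_le_iff, Pi.smul_apply, smul_ne_zero_iff, hd, ne_eq, not_false_eq_true, true_and]

theorem maxVar_X {q : ℕ} (hq : 1 ≤ q) (hqn : q ≤ n) : maxVar (X n q) = q := by
  obtain ⟨p, rfl⟩ := Nat.exists_eq_add_of_le' hq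
  refine eq_of_forall_ge_iff fun r => ?_
  simp only [maxVar_le_iff, X_succ_eq_single ⟨p, hqn⟩, Pi.single_apply, ne_eq,
    ite_eq_right_iff, one_ne_zero, imp_false, not_not, forall_eq]

theorem nsmul_X_mem_A {k d : ℕ} (hkn : k < n) (hd : d ≠ 0) : d • X n (k + 1) ∈ A n k d := by
  constructor
  · rw [degree_nsmul, degree_X k.succ_pos hkn, mul_one]
  · rw [maxVar_nsmul hd, maxVar_X k.succ_pos hkn]

theorem X_add_nsmul_X_mem_A {p k e : ℕ} (hp : 1 ≤ p) (hpk : p ≤ k + 1) (hkn : k < n)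
    (he : e ≠ 0) : X n p + e • X n (k + 1) ∈ A n k (e + 1) := by
  obtain ⟨hdeg, hmax⟩ := nsmul_X_mem_A hkn he
  constructor
  · rw [degree_add, hdeg, degree_X hp (hpk.trans hkn), add_comm]
  · rw [maxVar_add, hmax, maxVar_X hp (hpk.trans hkn), max_eq_right hpk]

theorem exists_ne_zero_of_ne_nsmul_X {u : Mon n} {q : ℕ} (hq : maxVar u ≤ q)
    (hu : u ≠ degree u • X n q) : ∃ i, u i ≠ 0 ∧ (i : ℕ) + 1 < q := by
  by_contra! h
  have only_X (i : Fin n) : u i • X n (i + 1) = u i • X n q := by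
    rcases eq_or_ne (u i) 0 with hi | hi
    · rw [hi, zero_smul, zero_smul]
    · rw [(maxVar_le_iff.mp hq i hi).antisymm (h i hi)]
  apply hu
  calc u = ∑ i, u i • X n (i + 1) := (sum_nsmul_X u).symm
    _ = ∑ i, u i • X n q := Finset.sum_congr rfl fun i _ => only_X i
    _ = degree u • X n q := (Finset.sum_smul ..).symm

end MaxVar

section Lex

variable {n : ℕ}

theorem lexLE_iff_toLex_le {u v : Mon n} : lexLE u v ↔ toLex u ≤ toLex v :=
  (le_iff_eq_or_lt (a := toLex u) (b := toLex v)).symm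

theorem toLex_nsmul_X_lt_toLex_X {p q : ℕ} (hp : 1 ≤ p) (hpn : p ≤ n) (hpq : p < q) (d : ℕ) :
    toLex (d • X n q) < toLex (X n p) := by
  refine ⟨⟨p - 1, by omega⟩, fun j hj => ?_, ?_⟩
  · have : (j : ℕ) < p - 1 := hj
    simp [X, show (j : ℕ) + 1 ≠ q by omega, show (j : ℕ) + 1 ≠ p by omega]
  · simp [X, Nat.sub_add_cancel hp, hpq.ne]

theorem toLex_X_le_toLex_X {p q : ℕ} (hp : 1 ≤ p) (hpn : p ≤ n) (hpq : p ≤ q) :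
    toLex (X n q) ≤ toLex (X n p) := by
  rcases hpq.eq_or_lt with rfl | hpq
  · rfl
  · simpa only [one_smul] using (toLex_nsmul_X_lt_toLex_X hp hpn hpq 1).le

theorem toLex_sum_le_toLex_sum {ι : Type*} {s : Finset ι} {f g : ι → Mon n}
    (h : ∀ i ∈ s, toLex (f i) ≤ toLex (g i)) : toLex (∑ i ∈ s, f i) ≤ toLex (∑ i ∈ s, g i) :=
  Finset.sum_le_sum h

theorem toLex_le_toLex_degree_nsmul_X_one (u : Mon n) :
    toLex u ≤ toLex (degree u • X n 1) := by
  conv_lhs => rw [← sum_nsmul_X u]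
  rw [degree, Finset.sum_smul]
  refine toLex_sum_le_toLex_sum fun i _ => ?_
  exact nsmul_le_nsmul_right (toLex_X_le_toLex_X le_rfl i.pos (Nat.le_add_left 1 i)) (u i)

theorem toLex_degree_nsmul_X_le_toLex {u : Mon n} {q : ℕ} (hq : maxVar u ≤ q) :
    toLex (degree u • X n q) ≤ toLex u := by
  conv_rhs => rw [← sum_nsmul_X u]
  rw [degree, Finset.sum_smul]
  refine toLex_sum_le_toLex_sum fun i _ => ?_
  rcases eq_or_ne (u i) 0 with hi | hi
  · rw [hi, zero_smul, zero_smul]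
  · exact nsmul_le_nsmul_right
      (toLex_X_le_toLex_X (Nat.le_add_left 1 i) i.isLt (maxVar_le_iff.mp hq i hi)) (u i)

theorem toLex_X_add_nsmul_X_le_toLex {u : Mon n} {k d : ℕ} (hmax : maxVar u ≤ k + 1)
    (hdeg : degree u = d + 1) (hu : u ≠ (d + 1) • X n (k + 1)) :
    toLex (X n k + d • X n (k + 1)) ≤ toLex u := by
  rw [← hdeg] at hu
  obtain ⟨i, hi, hik⟩ := exists_ne_zero_of_ne_nsmul_X hmax hu
  obtain ⟨v, rfl⟩ := exists_add_of_le (X_succ_le hi)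
  have hv : degree v = d := by
    rw [degree_add, degree_X (by omega) i.isLt] at hdeg
    omega
  have hvmax : maxVar v ≤ k + 1 := (le_max_right _ _).trans (maxVar_add _ v ▸ hmax)
  rw [toLex_add, toLex_add, ← hv]
  exact add_le_add (toLex_X_le_toLex_X (by omega) i.isLt (by omega))
    (toLex_degree_nsmul_X_le_toLex hvmax)

end Lex

section LexShadow

variable {n k t : ℕ} {Ms : Set (Mon n)} {w z : Mon n}

theorem mem_lexShad_iff (hw : w ∈ Ms) (hmin : ∀ v ∈ Ms, lexLE w v) :
    z ∈ lexShad t Ms ↔ degree z = degree w + t ∧ toLex (w + t • X n n) ≤ toLex z := by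
  constructor
  · rintro ⟨w', hw', hmin', hdeg, -, hle⟩
    obtain rfl : w' = w := toLex_inj.mp <|
      (lexLE_iff_toLex_le.mp (hmin' w hw)).antisymm (lexLE_iff_toLex_le.mp (hmin w' hw'))
    exact ⟨hdeg, lexLE_iff_toLex_le.mp hle⟩
  · rintro ⟨hdeg, hle⟩
    have htop := toLex_le_toLex_degree_nsmul_X_one z
    rw [hdeg] at htop
    exact ⟨w, hw, hmin, hdeg, lexLE_iff_toLex_le.mpr htop, lexLE_iff_toLex_le.mpr hle⟩

theorem nsmul_X_notMem_lexShad {p q d : ℕ} (hp : 1 ≤ p) (hpn : p ≤ n) (hpq : p < q)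
    (hw : w ∈ Ms) (hmin : ∀ v ∈ Ms, lexLE w v) (hpw : X n p ≤ w) :
    d • X n q ∉ lexShad t Ms := by
  rw [mem_lexShad_iff hw hmin]
  rintro ⟨-, hle⟩
  refine hle.not_gt ?_
  calc toLex (d • X n q) < toLex (X n p) := toLex_nsmul_X_lt_toLex_X hp hpn hpq d
    _ ≤ toLex (w + t • X n n) := Pi.toLex_monotone (le_add_of_le_left hpw)

theorem mem_lexShad_of_ne_nsmul_X {u v : Mon n} (hk : 1 ≤ k) (hkn : k < n)
    (hw : X n k + v ∈ Ms) (hmin : ∀ z ∈ Ms, lexLE (X n k + v) z)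
    (hv : toLex v ≤ toLex (degree v • X n (k + 1)))
    (hmax : maxVar u ≤ k + 1) (hdeg : degree u = degree v + t + 1)
    (hu : u ≠ (degree v + t + 1) • X n (k + 1)) :
    u ∈ lexShad t Ms := by
  refine (mem_lexShad_iff hw hmin).mpr ⟨?_, ?_⟩
  · rw [hdeg, degree_add, degree_X hk hkn.le]
    ring
  · have hX : toLex (t • X n n) ≤ toLex (t • X n (k + 1)) :=
      nsmul_le_nsmul_right (toLex_X_le_toLex_X k.succ_pos hkn hkn) t
    calc toLex (X n k + v + t • X n n)
        = toLex (X n k) + (toLex v + toLex (t • X n n)) := by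
          rw [toLex_add, toLex_add, add_assoc]
      _ ≤ toLex (X n k) + (toLex (degree v • X n (k + 1)) + toLex (t • X n (k + 1))) := by
          gcongr
      _ = toLex (X n k + (degree v + t) • X n (k + 1)) := by
          rw [add_smul, toLex_add, toLex_add]
      _ ≤ toLex u := toLex_X_add_nsmul_X_le_toLex hmax hdeg hu

theorem A_diff_lexShad_eq_singleton {v : Mon n} {ℓ : ℕ} (hk : 1 ≤ k) (hkn : k < n)
    (hw : X n k + v ∈ Ms) (hmin : ∀ u ∈ Ms, lexLE (X n k + v) u)
    (hv : toLex v ≤ toLex (degree v • X n (k + 1))) (hℓ : ℓ = degree v + t + 1) :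
    A n k ℓ \ lexShad t Ms = {ℓ • X n (k + 1)} := by
  subst hℓ
  refine Set.Subset.antisymm ?_ (Set.singleton_subset_iff.mpr ⟨?_, ?_⟩)
  · rintro u ⟨⟨hdeg, hmax⟩, hnot⟩
    by_contra hu
    exact hnot (mem_lexShad_of_ne_nsmul_X hk hkn hw hmin hv hmax.le hdeg hu)
  · exact nsmul_X_mem_A hkn (Nat.succ_ne_zero _)
  · exact nsmul_X_notMem_lexShad hk hkn.le k.lt_succ_self hw hmin le_self_add

end LexShadow

theorem statement7_general {n k₁ k₂ e ℓ : ℕ} (hk₁ : k₁ < n) (hk₂₁ : k₂ ≤ k₁) (hk₂ : 1 ≤ k₂)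
    (he : e ≠ 0) (hℓ : e + 1 ≤ ℓ) :
    {u ∈ A n k₂ ℓ | lexLE (ℓ • X n (k₂ + 1)) u} \
        lexShad (ℓ - (e + 1))
          {u ∈ A n k₁ (e + 1) | lexLE (X n k₂ + e • X n (k₁ + 1)) u} =
      {ℓ • X n (k₂ + 1)} := by
  have hA₂ : {u ∈ A n k₂ ℓ | lexLE (ℓ • X n (k₂ + 1)) u} = A n k₂ ℓ := by
    refine Set.sep_eq_self_iff_mem_true.mpr ?_
    rintro u ⟨rfl, hmax⟩
    exact lexLE_iff_toLex_le.mpr (toLex_degree_nsmul_X_le_toLex hmax.le)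
  have hdeg : degree (e • X n (k₁ + 1)) = e := (nsmul_X_mem_A hk₁ he).1
  have hw := X_add_nsmul_X_mem_A hk₂ (by omega : k₂ ≤ k₁ + 1) hk₁ he
  have hX : toLex (X n (k₁ + 1)) ≤ toLex (X n (k₂ + 1)) :=
    toLex_X_le_toLex_X k₂.succ_pos (by omega) (by omega)
  rw [hA₂]
  refine A_diff_lexShad_eq_singleton hk₂ (by omega) ⟨hw, .inl rfl⟩ (fun u hu => hu.2) ?_ (by omega)
  rw [hdeg]
  exact nsmul_le_nsmul_right hX e

/-- Let `n ≥ 4`, `n−1 ≥ k₁ > k₂ ≥ 2`, `ℓ₂ > 2`. With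
`A₁ = {u ∈ A(k₁,2) : u ≥_lex x_{k₂} x_{k₁+1}}` and
`A₂ = {u ∈ A(k₂,ℓ₂) : u ≥_lex x_{k₂+1}^{ℓ₂}}`, one has
`A₂ \ LexShad^{ℓ₂−2}(A₁) = {x_{k₂+1}^{ℓ₂}}`. -/
theorem statement7 (n : ℕ) (hn : 4 ≤ n) (k₁ k₂ ℓ₂ : ℕ)
    (hk1 : k₁ ≤ n - 1) (hk12 : k₂ < k₁) (hk2 : 2 ≤ k₂) (hl2 : 2 < ℓ₂) :
    {u ∈ A n k₂ ℓ₂ | lexLE (ℓ₂ • X n (k₂ + 1)) u} \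
        lexShad (ℓ₂ - 2) {u ∈ A n k₁ 2 | lexLE (X n k₂ + X n (k₁ + 1)) u} =
      {ℓ₂ • X n (k₂ + 1)} := by
  simpa only [one_smul] using
    statement7_general (e := 1) (by omega : k₁ < n) hk12.le (by omega) one_ne_zero hl2.le

end ExtremalBetti
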